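/- arXiv:1607.03058 — 2 statements merged into one kernel-verified Lean document; each statement's English description precedes it below -/
import Mathlib

section
/- Let n ≥ 1 and let A be an invertible n×n integer matrix having no root-of-unity eigenvalue. Then the group ℤⁿ ⋊_A ℤ has no commutative subgroup of finite index (it is not virtually abelian). -/
/-- The multiplicative automorphism of `Multiplicative (Fin n → ℤ)` determined by an
invertible integer matrix `A`, acting by `v ↦ A v`. -/
noncomputable def glMulAut {n : ℕ} (A : GL (Fin n) ℤ) : MulAut (Multiplicative (Fin n → ℤ)) :=
  AddEquiv.toMultiplicative
    ((Matrix.GeneralLinearGroup.toLin A).toLinearEquiv.toAddEquiv)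

/-- The action of `ℤ` on `ℤⁿ = Fin n → ℤ` sending `k` to the `k`-th power of the
automorphism determined by `A`. -/
noncomputable def glZAction {n : ℕ} (A : GL (Fin n) ℤ) :
    Multiplicative ℤ →* MulAut (Multiplicative (Fin n → ℤ)) :=
  zpowersHom _ (glMulAut A)

/-- The semidirect product `ℤⁿ ⋊_A ℤ`. -/
noncomputable abbrev ZSemidirect {n : ℕ} (A : GL (Fin n) ℤ) : Type :=
  SemidirectProduct (Multiplicative (Fin n → ℤ)) (Multiplicative ℤ) (glZAction A)

/-- `A` has no root-of-unity eigenvalue: `det (Aᵏ − 1) ≠ 0` for every integer `k ≥ 1`. -/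
def NoRootOfUnityEigenvalue {n : ℕ} (A : GL (Fin n) ℤ) : Prop :=
  ∀ k : ℤ, 1 ≤ k → (((A ^ k : GL (Fin n) ℤ) : Matrix (Fin n) (Fin n) ℤ) - 1).det ≠ 0

/-!
A commutative subgroup of finite index contains a power `(0, k)`, `k ≥ 1`, of the generator of `ℤ`
and, for every `v`, a nonzero multiple `(m • v, 0)`. As these commute, `Aᵏ` fixes `m • v`, hence
fixes `v`. The exponent `k` does not depend on `v`, so `Aᵏ = 1`; then `det (Aᵏ - 1) = 0`, a
contradiction.
-/

section SemidirectProduct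

variable {N G : Type*} [Group N] [Group G] {φ : G →* MulAut N}

lemma commute_inr_inl_iff {g : G} {x : N} :
    Commute (SemidirectProduct.inr g : N ⋊[φ] G) (SemidirectProduct.inl x) ↔ φ g x = x := by
  rw [commute_iff_eq, ← mul_inv_eq_iff_eq_mul, ← map_inv, ← SemidirectProduct.inl_aut,
    SemidirectProduct.inl_inj]

lemma isOfFinOrder_apply_of_commutative_of_index_ne_zero [IsMulTorsionFree N]
    {K : Subgroup (N ⋊[φ] G)} (hK : K.index ≠ 0) (hcomm : ∀ x ∈ K, ∀ y ∈ K, x * y = y * x)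
    (g : G) : IsOfFinOrder (φ g) := by
  obtain ⟨k, hk, -, hgK⟩ := Subgroup.exists_pow_mem_of_index_ne_zero hK (SemidirectProduct.inr g)
  refine isOfFinOrder_iff_pow_eq_one.mpr ⟨k, hk, MulEquiv.ext fun x ↦ ?_⟩
  obtain ⟨m, hm, -, hxK⟩ := Subgroup.exists_pow_mem_of_index_ne_zero hK (SemidirectProduct.inl x)
  have hfix : φ (g ^ k) (x ^ m) = x ^ m := by
    rw [← commute_inr_inl_iff, map_pow, map_pow]
    exact hcomm _ hgK _ hxK
  rw [map_pow, map_pow] at hfix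
  exact pow_left_injective hm.ne' hfix

end SemidirectProduct

/-- The action of `GL(n, ℤ)` on `ℤⁿ` by group automorphisms: `glMulAut` bundled as a
homomorphism, so that orders of elements can be transported along it. -/
noncomputable def glMulAutHom (n : ℕ) : GL (Fin n) ℤ →* MulAut (Multiplicative (Fin n → ℤ)) where
  toFun := glMulAut
  map_one' := by ext v; simp [glMulAut]
  map_mul' _ _ := by ext v; simp [glMulAut]

lemma glMulAutHom_injective (n : ℕ) : Function.Injective (glMulAutHom n) := fun _ _ h ↦
  Units.ext <| Matrix.ext_of_mulVec_single fun i ↦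
    congrArg Multiplicative.toAdd (DFunLike.congr_fun h (Multiplicative.ofAdd (Pi.single i 1)))

lemma NoRootOfUnityEigenvalue.not_isOfFinOrder {n : ℕ} [NeZero n] {A : GL (Fin n) ℤ}
    (hA : NoRootOfUnityEigenvalue A) : ¬ IsOfFinOrder A := by
  rw [isOfFinOrder_iff_pow_eq_one]
  rintro ⟨k, hk, hAk⟩
  apply hA k (mod_cast hk)
  rw [zpow_natCast, hAk, Units.val_one, sub_self, Matrix.det_zero]

theorem stmt3_general {n : ℕ} (A : GL (Fin n) ℤ) (hA : ¬ IsOfFinOrder A) :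
    ¬ ∃ K : Subgroup (ZSemidirect A), K.index ≠ 0 ∧
        ∀ x ∈ K, ∀ y ∈ K, x * y = y * x := by
  rintro ⟨K, hK, hcomm⟩
  have hfin : IsOfFinOrder (glZAction A (Multiplicative.ofAdd 1)) :=
    isOfFinOrder_apply_of_commutative_of_index_ne_zero hK hcomm _
  have hgen : glZAction A (Multiplicative.ofAdd 1) = glMulAutHom n A := zpow_one (glMulAut A)
  rw [hgen, (glMulAutHom_injective n).isOfFinOrder_iff] at hfin
  exact hA hfin

/-- `ℤⁿ ⋊_A ℤ` is not virtually abelian when `A` has no root-of-unity eigenvalue: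
it has no commutative subgroup of finite index. -/
theorem stmt3 {n : ℕ} (hn : 1 ≤ n) (A : GL (Fin n) ℤ)
    (hA : NoRootOfUnityEigenvalue A) :
    ¬ ∃ K : Subgroup (ZSemidirect A), K.index ≠ 0 ∧
        ∀ x ∈ K, ∀ y ∈ K, x * y = y * x := by
  have : NeZero n := ⟨Nat.one_le_iff_ne_zero.mp hn⟩
  exact stmt3_general A hA.not_isOfFinOrder
end

section
/- Let A be an invertible 2×2 integer matrix with det(A − 1) ≠ 0. Then for every natural number p ≥ 2, there is no group homomorphism from ℤ² ⋊_A ℤ to FreeGroup (Fin p) whose range is a subgroup of finite index; in particular there is no surjective homomorphism ℤ² ⋊_A ℤ → FreeGroup (Fin p). -/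
/-!
A solvable subgroup of a free group is itself free, by Nielsen–Schreier, hence cyclic, because a
free group of rank at least two surjects onto the non-solvable group `S₅`. A cyclic subgroup has
infinite index in a free group on generators `a ≠ b`, since one of finite index would contain powers
of both `a` and `b`; these do not commute, because distinct positive words are distinct elements of
the free group. The group `ℤ² ⋊_A ℤ` is solvable, and so are its homomorphic images.
-/

section

open Function

variable {α : Type*}

theorem toWord_freeMonoid_lift_of [DecidableEq α] (w : FreeMonoid α) :
    (FreeMonoid.lift FreeGroup.of w).toWord = w.toList.map (·, true) := by
  induction w using FreeMonoid.inductionOn' with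
  | one => simp
  | of_mul a w ih =>
    have hred : FreeGroup.IsReduced ((FreeMonoid.of a * w).toList.map (·, true)) :=
      (List.isChain_map _).mpr (List.Pairwise.isChain (List.pairwise_of_forall fun _ _ _ ↦ rfl))
    rw [map_mul, FreeMonoid.lift_eval_of, FreeGroup.toWord_mul, ih, FreeGroup.toWord_of]
    exact hred.reduce_eq

theorem freeMonoid_lift_freeGroup_of_injective :
    Injective (FreeMonoid.lift FreeGroup.of : FreeMonoid α →* FreeGroup α) := by
  classical
  intro v w h
  have hmap : v.toList.map (·, true) = w.toList.map (·, true) := by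
    rw [← toWord_freeMonoid_lift_of, ← toWord_freeMonoid_lift_of, h]
  exact FreeMonoid.toList.injective ((Prod.mk_left_injective true).list_map hmap)

theorem eq_of_commute_freeMonoid_of_pow {a b : α} {m n : ℕ} (hm : m ≠ 0) (hn : n ≠ 0)
    (h : Commute (FreeMonoid.of a ^ m) (FreeMonoid.of b ^ n)) : a = b := by
  obtain ⟨m, rfl⟩ := Nat.exists_eq_succ_of_ne_zero hm
  obtain ⟨n, rfl⟩ := Nat.exists_eq_succ_of_ne_zero hn
  have hhead := congrArg (fun w ↦ w.toList.head?) h.eq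
  simpa [pow_succ'] using hhead

theorem eq_of_commute_freeGroup_of_pow {a b : α} {m n : ℕ} (hm : m ≠ 0) (hn : n ≠ 0)
    (h : Commute (FreeGroup.of a ^ m) (FreeGroup.of b ^ n)) : a = b := by
  refine eq_of_commute_freeMonoid_of_pow hm hn (.of_map freeMonoid_lift_freeGroup_of_injective ?_)
  simpa only [map_pow, FreeMonoid.lift_eval_of] using h

theorem not_isSolvable_freeGroup [Nontrivial α] : ¬ Group.IsSolvable (FreeGroup α) := by
  classical
  obtain ⟨a, b, hab⟩ := exists_pair_ne α
  let f : FreeGroup α →* Equiv.Perm (Fin 5) :=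
    FreeGroup.lift fun i ↦ if i = a then finRotate 5 else Equiv.swap 0 (finRotate 5 0)
  have hrot : f (FreeGroup.of a) = finRotate 5 := by simp [f]
  have hswap : f (FreeGroup.of b) = Equiv.swap 0 (finRotate 5 0) := by simp [f, hab.symm]
  have hclosure : Subgroup.closure {finRotate 5, Equiv.swap 0 (finRotate 5 0)} = ⊤ :=
    Equiv.Perm.closure_cycle_adjacent_swap isCycle_finRotate support_finRotate 0
  have hf : Surjective f := by
    rw [← MonoidHom.range_eq_top, eq_top_iff, ← hclosure, Subgroup.closure_le, Set.pair_subset_iff]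
    exact ⟨⟨_, hrot⟩, ⟨_, hswap⟩⟩
  intro _
  exact Equiv.Perm.not_isSolvable_fin_5 (Group.isSolvable_of_surjective hf)

theorem isCyclic_of_isFreeGroup_of_isSolvable (G : Type*) [Group G] [IsFreeGroup G]
    [Group.IsSolvable G] : IsCyclic G := by
  let e : G ≃* FreeGroup (IsFreeGroup.Generators G) := IsFreeGroup.toFreeGroup G
  have hsolv : Group.IsSolvable (FreeGroup (IsFreeGroup.Generators G)) :=
    Group.isSolvable_of_surjective (f := e.toMonoidHom) e.surjective
  have : Subsingleton (IsFreeGroup.Generators G) :=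
    not_nontrivial_iff_subsingleton.mp fun _ ↦ not_isSolvable_freeGroup hsolv
  have : IsCyclic (FreeGroup (IsFreeGroup.Generators G)) := by
    cases isEmpty_or_nonempty (IsFreeGroup.Generators G)
    · infer_instance
    · have := uniqueOfSubsingleton (Classical.arbitrary (IsFreeGroup.Generators G))
      infer_instance
  exact e.isCyclic.mpr this

theorem freeGroup_index_eq_zero_of_isMulCommutative [Nontrivial α] (H : Subgroup (FreeGroup α))
    [IsMulCommutative H] : H.index = 0 := by
  by_contra hH
  obtain ⟨a, b, hab⟩ := exists_pair_ne α
  obtain ⟨m, hm, -, ham⟩ := H.exists_pow_mem_of_index_ne_zero hH (FreeGroup.of a)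
  obtain ⟨n, hn, -, hbn⟩ := H.exists_pow_mem_of_index_ne_zero hH (FreeGroup.of b)
  exact hab (eq_of_commute_freeGroup_of_pow hm.ne' hn.ne' (setLike_mul_comm ham hbn))

theorem freeGroup_index_eq_zero_of_isSolvable [Nontrivial α] (H : Subgroup (FreeGroup α))
    [Group.IsSolvable H] : H.index = 0 :=
  have := isCyclic_of_isFreeGroup_of_isSolvable H
  freeGroup_index_eq_zero_of_isMulCommutative H

theorem isSolvable_semidirectProduct {N G : Type*} [Group N] [Group G] [Group.IsSolvable N]
    [Group.IsSolvable G] (φ : G →* MulAut N) : Group.IsSolvable (N ⋊[φ] G) :=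
  Group.isSolvable_of_ker_le_range SemidirectProduct.inl SemidirectProduct.rightHom
    SemidirectProduct.range_inl_eq_ker_rightHom.ge

theorem stmt10_general {G : Type*} [Group G] [Group.IsSolvable G] [Nontrivial α]
    (φ : G →* FreeGroup α) : φ.range.index = 0 ∧ ¬ Surjective φ := by
  have hindex : φ.range.index = 0 :=
    have := Group.isSolvable_of_surjective φ.rangeRestrict_surjective
    freeGroup_index_eq_zero_of_isSolvable φ.range
  refine ⟨hindex, fun hφ ↦ ?_⟩
  rw [MonoidHom.range_eq_top.mpr hφ, Subgroup.index_top] at hindex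
  exact one_ne_zero hindex

end

/-- Sol³ argument: for an invertible `2 × 2` integer matrix `A` with
`det (A − 1) ≠ 0`, no homomorphism from `ℤ² ⋊_A ℤ` to a free group on `p ≥ 2`
generators has finite-index range; in particular there is no surjective such
homomorphism. -/
theorem stmt10 (A : GL (Fin 2) ℤ)
    (hA : ((A : Matrix (Fin 2) (Fin 2) ℤ) - 1).det ≠ 0)
    (p : ℕ) (hp : 2 ≤ p) :
    (¬ ∃ φ : ZSemidirect A →* FreeGroup (Fin p), φ.range.index ≠ 0) ∧
      ¬ ∃ φ : ZSemidirect A →* FreeGroup (Fin p), Function.Surjective φ := by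
  have := isSolvable_semidirectProduct (glZAction A)
  have := Fin.nontrivial_iff_two_le.mpr hp
  exact ⟨fun ⟨φ, hφ⟩ ↦ hφ (stmt10_general φ).1, fun ⟨φ, hφ⟩ ↦ (stmt10_general φ).2 hφ⟩
end
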